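/- Let h and k be coprime odd positive integers and let p ≥ 1 be an odd integer. Then 2 (hk)^p Σ (−1)^{u+v−1} E_p(u/k + v/h) = Σ_{s=0}^{p} C(p,s) (hk)^{p−s} E_s E_{p−s} − Σ_{s=0}^{p} C(p,s) h^s k^{p−s} E_s E_{p−s} − 2 E_p, where the sum on the left runs over all pairs of integers (u, v) with 0 ≤ u ≤ k−1, 0 ≤ v ≤ h−1 and uh + vk < hk, E_p(x) is the p-th Euler polynomial, and E_s denotes the s-th Euler number. -/

import Mathlib

open Finset

/-- The Euler numbers `E_n`, defined by `E_0 = 1` and the recurrence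
`∑_{l=0}^{n} C(n,l) E_l + E_n = 0` for `n ≥ 1`. -/
def eulerNumber : ℕ → ℚ
  | 0 => 1
  | n + 1 => -(∑ l : Fin (n + 1), ((n + 1).choose l : ℚ) * eulerNumber l) / 2

/-- The Euler polynomials `E_n(x) = ∑_{l=0}^{n} C(n,l) E_l x^{n-l}`. -/
noncomputable def eulerPoly (n : ℕ) (x : ℝ) : ℝ :=
  ∑ l ∈ Finset.range (n + 1), (n.choose l : ℝ) * (eulerNumber l : ℝ) * x ^ (n - l)

/-- The Euler function `Ē_p(x) = (-1)^⌊x⌋ E_p(x - ⌊x⌋)`. -/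
noncomputable def eulerFun (p : ℕ) (x : ℝ) : ℝ := (-1 : ℝ) ^ ⌊x⌋ * eulerPoly p (x - ⌊x⌋)

/-- The Dedekind-type DC sum `T_p(h,k) = 2 ∑_{u=1}^{k-1} (-1)^{u-1} (u/k) Ē_p(hu/k)`. -/
noncomputable def dcSum (p h k : ℕ) : ℝ :=
  2 * ∑ u ∈ Finset.Ico 1 k, (-1 : ℝ) ^ (u - 1) * ((u : ℝ) / k) * eulerFun p (h * u / k)

/-!
With `E(t) = 2 / (e^t + 1)` and `z = -e^t`, the series `E(nt) = 2 / (1 - z^n)` for odd `n` satisfies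
`E(mnt) * ∑_{i < n} z^{mi} = E(mt)` (Raabe's multiplication formula). The left side of the theorem
is `-p!` times the `p`-th coefficient of `2 E(hkt) P(z)`, where `P(z)` is the sum of `z^(uh + vk)`
over the lattice points below the diagonal of the `k × h` box. As the residues of `uh + vk` modulo
`hk` run once through all residue classes, and `uh + vk < 2hk`, one has
`P(z) (1 - z^(hk)) + z^(hk) ∑_{r < hk} z^r = (∑_{u < k} z^(hu)) (∑_{v < h} z^(kv))`.
Multiplied by `E(hkt)^2` this becomes
`2 E(hkt) P(z) + (E(hkt) - 2) E(t) = E(ht) E(kt)`.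
-/

section EGFCoeff

open PowerSeries
open scoped Nat

/-- The coefficient of `t^n / n!` in a power series, that is, the `n`-th term of the sequence of
which the series is the exponential generating function. -/
noncomputable def egfCoeff {R : Type*} [CommSemiring R] (n : ℕ) : R⟦X⟧ →ₗ[R] R :=
  (n ! : R) • coeff n

lemma egfCoeff_apply {R : Type*} [CommSemiring R] (n : ℕ) (F : R⟦X⟧) :
    egfCoeff n F = n ! * coeff n F :=
  rfl

lemma egfCoeff_mul {R : Type*} [CommSemiring R] (n : ℕ) (F G : R⟦X⟧) :
    egfCoeff n (F * G) =
      ∑ s ∈ range (n + 1), n.choose s * egfCoeff s F * egfCoeff (n - s) G := by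
  simp only [egfCoeff_apply, coeff_mul, Nat.sum_antidiagonal_eq_sum_range_succ_mk, mul_sum]
  refine sum_congr rfl fun s hs => ?_
  rw [← Nat.choose_mul_factorial_mul_factorial (mem_range_succ_iff.1 hs)]
  push_cast
  ring

lemma egfCoeff_rescale {R : Type*} [CommSemiring R] (n : ℕ) (a : R) (F : R⟦X⟧) :
    egfCoeff n (rescale a F) = a ^ n * egfCoeff n F := by
  rw [egfCoeff_apply, egfCoeff_apply, coeff_rescale, mul_left_comm]

variable {K : Type*} [Field K] [CharZero K]

lemma egfCoeff_mk_div_factorial (n : ℕ) (f : ℕ → K) :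
    egfCoeff n (mk fun i => f i / i !) = f n := by
  rw [egfCoeff_apply, coeff_mk, mul_div_cancel₀ _ (Nat.cast_ne_zero.2 n.factorial_ne_zero)]

lemma egfCoeff_exp (n : ℕ) : egfCoeff n (exp K) = 1 := by
  simp [egfCoeff_apply, n.factorial_ne_zero]

lemma ext_egfCoeff {F G : K⟦X⟧} (h : ∀ n, egfCoeff n F = egfCoeff n G) : F = G := by
  ext n
  exact mul_left_cancel₀ (Nat.cast_ne_zero.2 n.factorial_ne_zero) (h n)

end EGFCoeff

section EulerSeries

open PowerSeries
open scoped Nat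

lemma sum_choose_mul_eulerNumber_add (n : ℕ) :
    ∑ l ∈ range (n + 1), (n.choose l : ℚ) * eulerNumber l + eulerNumber n =
      if n = 0 then 2 else 0 := by
  cases n with
  | zero => norm_num [eulerNumber]
  | succ n =>
    rw [sum_range_succ, Nat.choose_self, eulerNumber, sum_range, if_neg n.succ_ne_zero]
    ring

variable (K : Type*) [Field K] [CharZero K]

/-- The exponential generating function `2 / (e^t + 1)` of the Euler numbers. -/
noncomputable def eulerPowerSeries : K⟦X⟧ :=
  mk fun n => (eulerNumber n : K) / n !

variable {K}

lemma egfCoeff_eulerPowerSeries (n : ℕ) : egfCoeff n (eulerPowerSeries K) = eulerNumber n :=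
  egfCoeff_mk_div_factorial n fun i => (eulerNumber i : K)

lemma eulerPowerSeries_mul_one_add_exp : eulerPowerSeries K * (1 + exp K) = 2 := by
  refine ext_egfCoeff fun n => ?_
  have hrec := congrArg (Rat.cast : ℚ → K) (sum_choose_mul_eulerNumber_add n)
  have htwo : egfCoeff n (2 : K⟦X⟧) = if n = 0 then 2 else 0 := by
    rw [← map_ofNat (C (R := K)) 2, egfCoeff_apply, coeff_C]
    split_ifs with hn <;> simp [hn]
  simp only [mul_add, mul_one, map_add, egfCoeff_mul, egfCoeff_exp, egfCoeff_eulerPowerSeries,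
    htwo]
  push_cast at hrec
  rw [add_comm, hrec]
  split_ifs <;> norm_num

lemma rescale_eulerPowerSeries_mul_one_sub_neg_exp_pow {n : ℕ} (hn : Odd n) :
    rescale (n : K) (eulerPowerSeries K) * (1 - (-exp K) ^ n) = 2 := by
  rw [hn.neg_pow, exp_pow_eq_rescale_exp, sub_neg_eq_add]
  simpa only [map_mul, map_add, map_one, map_ofNat] using
    congrArg (rescale (n : K)) (eulerPowerSeries_mul_one_add_exp (K := K))

lemma rescale_eulerPowerSeries_mul_geom_sum {m n : ℕ} (hm : Odd m) (hn : Odd n) :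
    rescale ((m * n : ℕ) : K) (eulerPowerSeries K) * ∑ i ∈ range n, ((-exp K) ^ m) ^ i =
      rescale (m : K) (eulerPowerSeries K) := by
  have hgeom := geom_sum_mul_neg ((-exp K) ^ m) n
  have hEm := rescale_eulerPowerSeries_mul_one_sub_neg_exp_pow (K := K) hm
  have hEmn := rescale_eulerPowerSeries_mul_one_sub_neg_exp_pow (K := K) (hm.mul hn)
  rw [← pow_mul] at hgeom
  set S := ∑ i ∈ range n, ((-exp K) ^ m) ^ i
  set Em := rescale (m : K) (eulerPowerSeries K)
  set Emn := rescale ((m * n : ℕ) : K) (eulerPowerSeries K)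
  have htwo : (2 : K⟦X⟧) ≠ 0 := by
    rw [← map_ofNat (C (R := K)) 2]
    exact (map_ne_zero_iff C C_injective).2 two_ne_zero
  apply mul_left_cancel₀ htwo
  linear_combination Em * Emn * hgeom + Em * hEmn - Emn * S * hEm

lemma egfCoeff_rescale_mul_rescale_eulerPowerSeries (p : ℕ) (a b : K) :
    egfCoeff p (rescale a (eulerPowerSeries K) * rescale b (eulerPowerSeries K)) =
      ∑ s ∈ range (p + 1),
        p.choose s * a ^ s * b ^ (p - s) * eulerNumber s * eulerNumber (p - s) := by
  simp only [egfCoeff_mul, egfCoeff_rescale, egfCoeff_eulerPowerSeries]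
  exact sum_congr rfl fun s _ => by ring

lemma egfCoeff_eulerPowerSeries_mul_rescale (p : ℕ) (a : K) :
    egfCoeff p (eulerPowerSeries K * rescale a (eulerPowerSeries K)) =
      ∑ s ∈ range (p + 1), p.choose s * a ^ (p - s) * eulerNumber s * eulerNumber (p - s) := by
  simpa only [rescale_one, RingHom.id_apply, one_pow, mul_one] using
    egfCoeff_rescale_mul_rescale_eulerPowerSeries p 1 a

lemma egfCoeff_eulerPowerSeries_mul_rescale_exp (p : ℕ) (x : ℝ) :
    egfCoeff p (eulerPowerSeries ℝ * rescale x (exp ℝ)) = eulerPoly p x := by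
  simp only [egfCoeff_mul, egfCoeff_rescale, egfCoeff_exp, egfCoeff_eulerPowerSeries, mul_one,
    eulerPoly]

lemma egfCoeff_rescale_eulerPowerSeries_mul_exp_pow (p m : ℕ) {a : ℝ} (ha : a ≠ 0) :
    egfCoeff p (rescale a (eulerPowerSeries ℝ) * exp ℝ ^ m) = a ^ p * eulerPoly p (m / a) := by
  rw [exp_pow_eq_rescale_exp, ← egfCoeff_eulerPowerSeries_mul_rescale_exp, ← egfCoeff_rescale,
    map_mul (rescale a), rescale_rescale, div_mul_cancel₀ _ ha]

end EulerSeries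

section LatticePoints

/-- The lattice points `(u, v)` of the box `[0, k) × [0, h)` strictly below its diagonal
`u / k + v / h = 1`, an inequality written without division as `u * h + v * k < h * k`. -/
def belowDiagonal (h k : ℕ) : Finset (ℕ × ℕ) :=
  {uv ∈ range k ×ˢ range h | uv.1 * h + uv.2 * k < h * k}

variable {h k : ℕ}

lemma injOn_mul_add_mul_mod (hcop : h.Coprime k) :
    Set.InjOn (fun uv : ℕ × ℕ => (uv.1 * h + uv.2 * k) % (h * k))
      (range k ×ˢ range h : Finset (ℕ × ℕ)) := by
  rintro ⟨u, v⟩ huv ⟨u', v'⟩ huv' heq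
  simp only [coe_product, Set.mem_prod, mem_coe, mem_range] at huv huv'
  have hmod : u * h + v * k ≡ u' * h + v' * k [MOD h * k] := heq
  have hu : u * h ≡ u' * h [MOD k] := by simpa [Nat.ModEq] using hmod.of_mul_left h
  have hv : v * k ≡ v' * k [MOD h] := by simpa [Nat.ModEq] using hmod.of_mul_right k
  exact Prod.ext
    ((Nat.ModEq.cancel_right_of_coprime hcop.symm hu).eq_of_lt_of_lt huv.1 huv'.1)
    ((Nat.ModEq.cancel_right_of_coprime hcop hv).eq_of_lt_of_lt huv.2 huv'.2)

lemma image_mul_add_mul_mod (hcop : h.Coprime k) :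
    (range k ×ˢ range h).image (fun uv => (uv.1 * h + uv.2 * k) % (h * k)) = range (h * k) := by
  apply eq_of_subset_of_card_le
  · simp only [image_subset_iff, mem_product, mem_range]
    exact fun uv huv => Nat.mod_lt _ (Nat.mul_pos (by omega) (by omega))
  · rw [card_image_of_injOn (injOn_mul_add_mul_mod hcop), card_product, card_range, card_range,
      card_range, mul_comm]

variable {R : Type*} [CommRing R]

lemma pow_eq_ite_add_pow_mod (z : R) {m n : ℕ} (hm : m < 2 * n) :
    z ^ m = (if m < n then z ^ m * (1 - z ^ n) else 0) + z ^ n * z ^ (m % n) := by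
  split_ifs with hmn
  · rw [Nat.mod_eq_of_lt hmn]
    ring
  · rw [zero_add, ← pow_add, Nat.mod_eq_sub_mod (by omega), Nat.mod_eq_of_lt (by omega),
      Nat.add_sub_cancel' (by omega)]

lemma sum_belowDiagonal_pow (hcop : h.Coprime k) (z : R) :
    (∑ uv ∈ belowDiagonal h k, z ^ (uv.1 * h + uv.2 * k)) * (1 - z ^ (h * k)) +
        z ^ (h * k) * ∑ r ∈ range (h * k), z ^ r =
      (∑ u ∈ range k, (z ^ h) ^ u) * ∑ v ∈ range h, (z ^ k) ^ v := by
  symm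
  calc (∑ u ∈ range k, (z ^ h) ^ u) * ∑ v ∈ range h, (z ^ k) ^ v
      = ∑ uv ∈ range k ×ˢ range h, z ^ (uv.1 * h + uv.2 * k) := by
        simp only [sum_mul_sum, sum_product, ← pow_mul, ← pow_add, mul_comm]
    _ = ∑ uv ∈ range k ×ˢ range h,
          ((if uv.1 * h + uv.2 * k < h * k then
              z ^ (uv.1 * h + uv.2 * k) * (1 - z ^ (h * k)) else 0) +
            z ^ (h * k) * z ^ ((uv.1 * h + uv.2 * k) % (h * k))) := by
        refine sum_congr rfl fun uv huv => pow_eq_ite_add_pow_mod z ?_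
        simp only [mem_product, mem_range] at huv
        nlinarith
    _ = _ := by
        rw [sum_add_distrib, ← sum_filter, ← sum_mul, ← mul_sum, belowDiagonal,
          ← image_mul_add_mul_mod hcop, sum_image (injOn_mul_add_mul_mod hcop)]

end LatticePoints

section Reciprocity

open PowerSeries

lemma two_mul_rescale_eulerPowerSeries_mul_sum_belowDiagonal {K : Type*} [Field K] [CharZero K]
    {h k : ℕ} (hh : Odd h) (hk : Odd k) (hcop : h.Coprime k) :
    2 * (rescale ((h * k : ℕ) : K) (eulerPowerSeries K) *
        ∑ uv ∈ belowDiagonal h k, (-exp K) ^ (uv.1 * h + uv.2 * k)) =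
      rescale (h : K) (eulerPowerSeries K) * rescale (k : K) (eulerPowerSeries K) -
        eulerPowerSeries K * rescale ((h * k : ℕ) : K) (eulerPowerSeries K) +
        2 * eulerPowerSeries K := by
  have hbox := sum_belowDiagonal_pow hcop (-exp K)
  have hE := rescale_eulerPowerSeries_mul_one_sub_neg_exp_pow (K := K) (hh.mul hk)
  have hrow := rescale_eulerPowerSeries_mul_geom_sum (K := K) hh hk
  have hcol := rescale_eulerPowerSeries_mul_geom_sum (K := K) hk hh
  have hall := rescale_eulerPowerSeries_mul_geom_sum (K := K) odd_one (hh.mul hk)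
  rw [mul_comm k h] at hcol
  simp only [one_mul, pow_one, Nat.cast_one, rescale_one, RingHom.id_apply] at hall
  rw [← hrow, ← hcol]
  set E := rescale ((h * k : ℕ) : K) (eulerPowerSeries K)
  set P := ∑ uv ∈ belowDiagonal h k, (-exp K) ^ (uv.1 * h + uv.2 * k)
  linear_combination E ^ 2 * hbox - (E * P - eulerPowerSeries K) * hE -
    E * (-exp K) ^ (h * k) * hall

lemma egfCoeff_rescale_eulerPowerSeries_mul_neg_exp_pow {h k : ℕ} (hh : Odd h) (hk : Odd k)
    (p u v : ℕ) :
    egfCoeff p (rescale ((h * k : ℕ) : ℝ) (eulerPowerSeries ℝ) * (-exp ℝ) ^ (u * h + v * k)) =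
      (-1) ^ (u + v) * ((h * k) ^ p * eulerPoly p (u / k + v / h)) := by
  have hh0 : (h : ℝ) ≠ 0 := Nat.cast_ne_zero.2 hh.pos.ne'
  have hk0 : (k : ℝ) ≠ 0 := Nat.cast_ne_zero.2 hk.pos.ne'
  have hsign : (-1 : ℝ⟦X⟧) ^ (u * h + v * k) = C ((-1) ^ (u + v)) := by
    rw [pow_add, pow_mul', pow_mul', hh.neg_one_pow, hk.neg_one_pow, ← pow_add]
    simp
  have harg : ((u * h + v * k : ℕ) : ℝ) / (h * k : ℕ) = u / k + v / h := by
    push_cast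
    field_simp
  rw [neg_pow, hsign, mul_left_comm, ← smul_eq_C_mul, map_smul, smul_eq_mul,
    egfCoeff_rescale_eulerPowerSeries_mul_exp_pow _ _
      (Nat.cast_ne_zero.2 (hh.mul hk).pos.ne'), harg, Nat.cast_mul]

lemma egfCoeff_rescale_eulerPowerSeries_mul_sum_belowDiagonal {h k : ℕ} (hh : Odd h)
    (hk : Odd k) (p : ℕ) :
    egfCoeff p (rescale ((h * k : ℕ) : ℝ) (eulerPowerSeries ℝ) *
        ∑ uv ∈ belowDiagonal h k, (-exp ℝ) ^ (uv.1 * h + uv.2 * k)) =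
      (h * k) ^ p *
        ∑ uv ∈ belowDiagonal h k, (-1) ^ (uv.1 + uv.2) * eulerPoly p (uv.1 / k + uv.2 / h) := by
  simp only [mul_sum, map_sum, egfCoeff_rescale_eulerPowerSeries_mul_neg_exp_pow hh hk,
    mul_left_comm]

end Reciprocity

theorem dcSum_reciprocity_aux3_general (h k p : ℕ)
    (hhodd : Odd h) (hkodd : Odd k) (hcop : Nat.Coprime h k) :
    2 * ((h : ℝ) * k) ^ p *
        ∑ uv ∈ (Finset.range k ×ˢ Finset.range h).filter
            (fun uv => uv.1 * h + uv.2 * k < h * k),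
          (-1 : ℝ) ^ (uv.1 + uv.2 + 1) * eulerPoly p ((uv.1 : ℝ) / k + (uv.2 : ℝ) / h) =
      ∑ s ∈ Finset.range (p + 1),
          (p.choose s : ℝ) * ((h : ℝ) * k) ^ (p - s) * (eulerNumber s : ℝ) *
            (eulerNumber (p - s) : ℝ)
        - ∑ s ∈ Finset.range (p + 1),
            (p.choose s : ℝ) * (h : ℝ) ^ s * (k : ℝ) ^ (p - s) * (eulerNumber s : ℝ) *
              (eulerNumber (p - s) : ℝ)
        - 2 * (eulerNumber p : ℝ) := by
  have hcoeff := congrArg (egfCoeff p)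
    (two_mul_rescale_eulerPowerSeries_mul_sum_belowDiagonal (K := ℝ) hhodd hkodd hcop)
  simp only [two_mul, map_add, map_sub,
    egfCoeff_rescale_eulerPowerSeries_mul_sum_belowDiagonal hhodd hkodd,
    egfCoeff_rescale_mul_rescale_eulerPowerSeries, egfCoeff_eulerPowerSeries_mul_rescale,
    egfCoeff_eulerPowerSeries] at hcoeff
  simp only [belowDiagonal, Nat.cast_mul] at hcoeff
  simp only [pow_succ, mul_neg_one, neg_mul, sum_neg_distrib]
  linear_combination -hcoeff

/-- For coprime odd positive `h, k` and odd `p ≥ 1`,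
`2 (hk)^p ∑_{(u,v) : 0 ≤ u ≤ k−1, 0 ≤ v ≤ h−1, uh+vk < hk} (−1)^{u+v−1} E_p(u/k + v/h)
  = ∑_{s=0}^{p} C(p,s) (hk)^{p−s} E_s E_{p−s} − ∑_{s=0}^{p} C(p,s) h^s k^{p−s} E_s E_{p−s} − 2 E_p`. -/
theorem dcSum_reciprocity_aux3 (h k p : ℕ) (hh : 0 < h) (hk : 0 < k)
    (hhodd : Odd h) (hkodd : Odd k) (hcop : Nat.Coprime h k)
    (hp : 1 ≤ p) (hpodd : Odd p) :
    2 * ((h : ℝ) * k) ^ p *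
        ∑ uv ∈ (Finset.range k ×ˢ Finset.range h).filter
            (fun uv => uv.1 * h + uv.2 * k < h * k),
          (-1 : ℝ) ^ (uv.1 + uv.2 + 1) * eulerPoly p ((uv.1 : ℝ) / k + (uv.2 : ℝ) / h) =
      ∑ s ∈ Finset.range (p + 1),
          (p.choose s : ℝ) * ((h : ℝ) * k) ^ (p - s) * (eulerNumber s : ℝ) *
            (eulerNumber (p - s) : ℝ)
        - ∑ s ∈ Finset.range (p + 1),
            (p.choose s : ℝ) * (h : ℝ) ^ s * (k : ℝ) ^ (p - s) * (eulerNumber s : ℝ) *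
              (eulerNumber (p - s) : ℝ)
        - 2 * (eulerNumber p : ℝ) := by
  exact dcSum_reciprocity_aux3_general h k p hhodd hkodd hcop
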